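/- arXiv:1001.0217 — 3 statements merged into one kernel-verified Lean document; each statement's English description precedes it below -/
import Mathlib

section
/- The Santaló map s, which assigns to each convex body K in ℝ^n its Santaló point s(K), is continuous from the space of convex bodies in ℝ^n equipped with the Hausdorff metric to ℝ^n: if convex bodies K_j converge to a convex body K in Hausdorff distance, then s(K_j) converges to s(K). -/
/-!
The proof replaces the volume of the polar body by the integral
`Φ(K, z) = ∫ exp (⟪y, z⟫ - h_K(y)) dy`, where `h_K` is the support function of `K`.
For `z` in the interior of `K`, the polar body `K^z` is the sublevel set `{g ≤ 1}` of the positively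
homogeneous function `g(y) = h_K(y) - ⟪y, z⟫`. By the layer cake formula, `Φ(K, z)` is a constant
multiple of `vol(K^z)`. Only one consequence of this is needed (`polarIntegral_le_of_volume_le`):
an inequality between volumes of polar bodies carries over to `Φ`, so a Santaló point
minimizes `Φ(K, ·)` over the interior of `K`.

Since `exp` is strictly convex, `Φ(K, ·)` is strictly midpoint convex where it is finite
(`polarIntegral_midpoint_lt`). Moreover `h_{K_j} → h_{K₀}` pointwise under Hausdorff convergence, so
dominated convergence gives `Φ(K_j, s₀) → Φ(K₀, s₀)` (`tendsto_polarIntegral`; the integrands are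
bounded by `exp (-r ‖y‖)` because `K_j` contains a fixed ball around `s₀`), and Fatou's lemma gives
`Φ(K₀, z) ≤ liminf Φ(K_j, s_j)` whenever `s_j → z` (`polarIntegral_le_liminf`).

By compactness it suffices to identify every subsequential limit `z` of `s_j`. It lies in `K₀`, and
`Φ(K₀, z) ≤ liminf Φ(K_j, s_j) ≤ lim Φ(K_j, s₀) = Φ(K₀, s₀)`. If `z ≠ s₀`, the midpoint of `z` and
`s₀` is an interior point of `K₀`, even if `z` is a boundary point, and there `Φ(K₀, ·)` is strictly
smaller than `Φ(K₀, s₀)`, contradicting the minimality of `s₀`.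
-/

open MeasureTheory Metric Set Pointwise RealInnerProductSpace

noncomputable section

abbrev Euc (n : ℕ) : Type := EuclideanSpace ℝ (Fin n)

/-- A convex body: a compact convex set with nonempty interior. -/
def IsConvexBody {n : ℕ} (K : Set (Euc n)) : Prop :=
  IsCompact K ∧ Convex ℝ K ∧ (interior K).Nonempty

/-- The polar body of `K` with center of polarity `z`. -/
def polarAt {n : ℕ} (K : Set (Euc n)) (z : Euc n) : Set (Euc n) :=
  {y | ∀ x ∈ K, ⟪y, x - z⟫ ≤ 1}

/-- `z` is the Santaló point of `K`: the interior point minimizing the volume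
of the polar body `K^z`. -/
def IsSantaloPoint {n : ℕ} (K : Set (Euc n)) (z : Euc n) : Prop :=
  z ∈ interior K ∧ ∀ w ∈ interior K, volume (polarAt K z) ≤ volume (polarAt K w)

open Filter Topology ENNReal

/-- The support function `h_K(y) = sup_{x ∈ K} ⟪y, x⟫`. It has junk value `0` where the supremum is
over an empty or unbounded set; it is only used for nonempty compact `K`. -/
def supportFn {n : ℕ} (K : Set (Euc n)) (y : Euc n) : ℝ :=
  sSup ((fun x => ⟪y, x⟫) '' K)

/-- The integral `Φ(K, z) = ∫ exp (⟪y, z⟫ - h_K(y)) dy`, with values in `[0, ∞]`. -/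
def polarIntegral {n : ℕ} (K : Set (Euc n)) (z : Euc n) : ℝ≥0∞ :=
  ∫⁻ y : Euc n, ENNReal.ofReal (Real.exp (⟪y, z⟫ - supportFn K y))

variable {n : ℕ} {K L : Set (Euc n)}

/-! ### Support functions -/

lemma inner_le_supportFn (hK : IsCompact K) (y : Euc n) {x : Euc n} (hx : x ∈ K) :
    ⟪y, x⟫ ≤ supportFn K y :=
  le_csSup (hK.image (by fun_prop)).bddAbove ⟨x, hx, rfl⟩

lemma supportFn_le (hne : K.Nonempty) {y : Euc n} {c : ℝ} (h : ∀ x ∈ K, ⟪y, x⟫ ≤ c) :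
    supportFn K y ≤ c :=
  csSup_le (hne.image _) (by rintro _ ⟨x, hx, rfl⟩; exact h x hx)

lemma supportFn_smul {t : ℝ} (ht : 0 ≤ t) (y : Euc n) :
    supportFn K (t • y) = t * supportFn K y := by
  unfold supportFn
  rw [← smul_eq_mul, ← Real.sSup_smul_of_nonneg ht, ← Set.image_smul, Set.image_image]
  simp [real_inner_smul_left]

lemma continuous_supportFn (hK : IsCompact K) : Continuous (supportFn K) :=
  hK.continuous_sSup (f := fun y x : Euc n => ⟪y, x⟫) (by fun_prop)

lemma measurable_polarIntegrand (hK : IsCompact K) (z : Euc n) :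
    Measurable fun y : Euc n => ENNReal.ofReal (Real.exp (⟪y, z⟫ - supportFn K y)) := by
  have := continuous_supportFn hK
  exact (ENNReal.continuous_ofReal.comp (by fun_prop)).measurable

lemma supportFn_le_add_hausdorffDist (hK : IsCompact K) (hL : IsCompact L)
    (hKne : K.Nonempty) (hLne : L.Nonempty) (y : Euc n) :
    supportFn K y ≤ supportFn L y + ‖y‖ * hausdorffDist K L := by
  refine supportFn_le hKne fun x hx => ?_
  obtain ⟨x', hx', hd⟩ := hL.exists_infDist_eq_dist hLne x
  have h1 : dist x x' ≤ hausdorffDist K L := hd ▸ infDist_le_hausdorffDist_of_mem hx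
    (hausdorffEDist_ne_top_of_nonempty_of_bounded hKne hLne hK.isBounded hL.isBounded)
  have h2 : ⟪y, x⟫ = ⟪y, x'⟫ + ⟪y, x - x'⟫ := by rw [inner_sub_right]; ring
  rw [h2]
  refine add_le_add (inner_le_supportFn hL y hx') ((real_inner_le_norm _ _).trans ?_)
  rw [← dist_eq_norm]
  gcongr

lemma abs_supportFn_sub_le (hK : IsCompact K) (hL : IsCompact L)
    (hKne : K.Nonempty) (hLne : L.Nonempty) (y : Euc n) :
    |supportFn K y - supportFn L y| ≤ ‖y‖ * hausdorffDist K L := by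
  have h1 := supportFn_le_add_hausdorffDist hK hL hKne hLne y
  have h2 := supportFn_le_add_hausdorffDist hL hK hLne hKne y
  rw [hausdorffDist_comm] at h2
  rw [abs_le]
  constructor <;> linarith

lemma supportFn_ge_of_closedBall_subset (hK : IsCompact K) {z : Euc n} {r : ℝ} (hr : 0 ≤ r)
    (h : closedBall z r ⊆ K) (y : Euc n) : ⟪y, z⟫ + r * ‖y‖ ≤ supportFn K y := by
  rcases eq_or_ne y 0 with rfl | hy
  · simpa using inner_le_supportFn hK 0 (h (mem_closedBall_self hr))
  have hy' : ‖y‖ ≠ 0 := norm_ne_zero_iff.2 hy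
  -- the point of the ball furthest in the direction of `y`
  have hx : z + (r * ‖y‖⁻¹) • y ∈ K := h (by
    simp [norm_smul, abs_of_nonneg hr, hy'])
  have := inner_le_supportFn hK y hx
  rw [inner_add_right, real_inner_smul_right, real_inner_self_eq_norm_sq] at this
  convert this using 2
  field_simp

/-- A point at which the support function dominates every linear functional belongs to the set,
by separation. -/
lemma mem_of_inner_le_supportFn (hK : IsCompact K) (hc : Convex ℝ K) (hne : K.Nonempty) {p : Euc n}
    (h : ∀ y, ⟪y, p⟫ ≤ supportFn K y) : p ∈ K := by
  by_contra hp
  obtain ⟨f, u, hu, hup⟩ := geometric_hahn_banach_closed_point hc hK.isClosed hp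
  have hf : ∀ x, ⟪(InnerProductSpace.toDual ℝ (Euc n)).symm f, x⟫ = f x := fun x =>
    InnerProductSpace.toDual_symm_apply
  have h1 := h ((InnerProductSpace.toDual ℝ (Euc n)).symm f)
  have h2 : supportFn K ((InnerProductSpace.toDual ℝ (Euc n)).symm f) ≤ u :=
    supportFn_le hne fun x hx => by rw [hf]; exact (hu x hx).le
  rw [hf] at h1
  linarith

lemma closedBall_subset_of_supportFn_ge (hK : IsCompact K) (hc : Convex ℝ K) (hne : K.Nonempty)
    {z : Euc n} {r : ℝ} (h : ∀ y, ⟪y, z⟫ + r * ‖y‖ ≤ supportFn K y) : closedBall z r ⊆ K := by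
  intro p hp
  refine mem_of_inner_le_supportFn hK hc hne fun y => le_trans ?_ (h y)
  have h2 : ⟪y, p⟫ = ⟪y, z⟫ + ⟪y, p - z⟫ := by rw [inner_sub_right]; ring
  have h3 := real_inner_le_norm y (p - z)
  have h4 : ‖p - z‖ ≤ r := by rwa [← dist_eq_norm]
  nlinarith [norm_nonneg y]

/-! ### Polar volume and the integral `Φ` -/

lemma polarAt_eq (hK : IsCompact K) (hne : K.Nonempty) (z : Euc n) :
    polarAt K z = {y | supportFn K y - ⟪y, z⟫ ≤ 1} := by
  ext y
  simp only [polarAt, mem_ofPred_eq, inner_sub_right]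
  refine ⟨fun h => ?_, fun h x hx => ?_⟩
  · linarith [supportFn_le hne (c := 1 + ⟪y, z⟫) fun x hx => by linarith [h x hx]]
  · linarith [inner_le_supportFn hK y hx]

/-- Sublevel sets of `h_K - ⟪·, z⟫` are dilates of the polar body. -/
lemma sublevel_eq_smul_polarAt (hK : IsCompact K) (hne : K.Nonempty) (z : Euc n) {t : ℝ}
    (ht : 0 < t) : {y | supportFn K y - ⟪y, z⟫ ≤ t} = t • polarAt K z := by
  ext y
  rw [Set.mem_smul_set_iff_inv_smul_mem₀ ht.ne', polarAt_eq hK hne]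
  simp only [mem_ofPred_eq]
  rw [supportFn_smul (inv_nonneg.2 ht.le), real_inner_smul_left, ← mul_sub, inv_mul_le_iff₀ ht,
    mul_one]

/-- An inequality between volumes of polar bodies carries over to `polarIntegral`, because by the
layer cake formula the two quantities are proportional, with a factor independent of the center. -/
lemma polarIntegral_le_of_volume_le (hK : IsCompact K) {z w : Euc n}
    (hz : z ∈ interior K) (h : volume (polarAt K z) ≤ volume (polarAt K w)) :
    polarIntegral K z ≤ polarIntegral K w := by
  have hne : K.Nonempty := ⟨z, interior_subset hz⟩
  have hcont := continuous_supportFn hK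
  have layer (v : Euc n) : polarIntegral K v =
      ∫⁻ t in Ioi 0, volume {y : Euc n | t ≤ Real.exp (⟪y, v⟫ - supportFn K y)} :=
    lintegral_eq_lintegral_meas_le _ (ae_of_all _ fun y => (Real.exp_pos _).le)
      (Continuous.measurable (by fun_prop)).aemeasurable
  rw [layer, layer]
  refine lintegral_mono_ae (ae_restrict_of_forall_mem measurableSet_Ioi fun t (ht : 0 < t) => ?_)
  have hset (v : Euc n) : {y : Euc n | t ≤ Real.exp (⟪y, v⟫ - supportFn K y)} =
      {y | supportFn K y - ⟪y, v⟫ ≤ -Real.log t} := by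
    ext y
    simp only [mem_ofPred_eq]
    rw [← Real.log_le_iff_le_exp ht]
    constructor <;> intro h <;> linarith
  rcases lt_or_ge t 1 with ht1 | ht1
  · have hl : 0 < -Real.log t := neg_pos.2 (Real.log_neg ht ht1)
    rw [hset, hset, sublevel_eq_smul_polarAt hK hne z hl, sublevel_eq_smul_polarAt hK hne w hl,
      Measure.addHaar_smul, Measure.addHaar_smul]
    gcongr
  · -- for `t ≥ 1` the left set is contained in `{0}`, and it is empty unless `t = 1`
    refine measure_mono fun y hy => ?_
    obtain ⟨r, hr, hball⟩ := nhds_basis_closedBall.mem_iff.1 (mem_interior_iff_mem_nhds.1 hz)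
    have h1 := supportFn_ge_of_closedBall_subset hK hr.le hball y
    have h2 : t ≤ Real.exp (⟪y, z⟫ - supportFn K y) := hy
    have h3 : 0 ≤ ⟪y, z⟫ - supportFn K y := Real.one_le_exp_iff.1 (ht1.trans h2)
    have h4 : y = 0 := norm_le_zero_iff.1 (by nlinarith [norm_nonneg y])
    subst h4
    simpa using h2

/-- Minimality of a Santaló point, expressed through `polarIntegral`. -/
lemma IsSantaloPoint.polarIntegral_le (hK : IsCompact K) {z w : Euc n} (hz : IsSantaloPoint K z)
    (hw : w ∈ interior K) : polarIntegral K z ≤ polarIntegral K w :=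
  polarIntegral_le_of_volume_le hK hz.1 (hz.2 w hw)

lemma lintegral_exp_neg_mul_norm_ne_top {a : ℝ} (ha : 0 < a) :
    ∫⁻ y : Euc n, ENNReal.ofReal (Real.exp (-(a * ‖y‖))) ≠ ∞ := by
  have hint : Integrable fun y : Euc n => (1 + ‖y‖) ^ (-((n + 1 : ℕ) : ℝ)) :=
    integrable_one_add_norm (by simp)
  -- from `u ^ k / k! ≤ exp u` with `u = a (1 + ‖y‖)` and `k = n + 1`
  have hbound (y : Euc n) : Real.exp (-(a * ‖y‖)) ≤
      Real.exp a * ((n + 1).factorial / a ^ (n + 1)) * (1 + ‖y‖) ^ (-((n + 1 : ℕ) : ℝ)) := by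
    have h0 : 0 < 1 + ‖y‖ := by positivity
    have h1 := Real.pow_div_factorial_le_exp (a * (1 + ‖y‖)) (by positivity) (n + 1)
    have h2 : Real.exp (-(a * ‖y‖)) = Real.exp a * (Real.exp (a * (1 + ‖y‖)))⁻¹ := by
      rw [← Real.exp_neg, ← Real.exp_add]; ring_nf
    rw [h2, Real.rpow_neg h0.le, Real.rpow_natCast, mul_assoc]
    refine mul_le_mul_of_nonneg_left ?_ (Real.exp_pos a).le
    refine (inv_anti₀ (by positivity) h1).trans (le_of_eq ?_)
    rw [mul_pow]
    field_simp
  refine ((lintegral_mono fun y => ENNReal.ofReal_le_ofReal (hbound y)).trans_lt ?_).ne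
  exact (hint.const_mul _).lintegral_lt_top

lemma polarIntegral_ne_top (hK : IsCompact K) {z : Euc n} (hz : z ∈ interior K) :
    polarIntegral K z ≠ ∞ := by
  obtain ⟨r, hr, hball⟩ := nhds_basis_closedBall.mem_iff.1 (mem_interior_iff_mem_nhds.1 hz)
  refine ((lintegral_mono fun y => ENNReal.ofReal_le_ofReal (Real.exp_le_exp.2 ?_)).trans_lt
    (lintegral_exp_neg_mul_norm_ne_top (n := n) hr).lt_top).ne
  linarith [supportFn_ge_of_closedBall_subset hK hr.le hball y]

/-! ### Strict convexity of `Φ` -/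

lemma ae_inner_ne_zero {v : Euc n} (hv : v ≠ 0) : ∀ᵐ y : Euc n, ⟪y, v⟫ ≠ 0 := by
  have hS : (ℝ ∙ v)ᗮ ≠ ⊤ := fun h => hv (by
    simpa using Submodule.mem_orthogonal_singleton_iff_inner_left.1
      (h ▸ Submodule.mem_top : v ∈ (ℝ ∙ v)ᗮ))
  refine measure_mono_null (fun y hy => ?_) (Measure.addHaar_submodule volume _ hS)
  exact Submodule.mem_orthogonal_singleton_iff_inner_left.2 (by simpa using hy)

lemma exp_midpoint_lt {a b : ℝ} (h : a ≠ b) :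
    2 * Real.exp ((a + b) / 2) < Real.exp a + Real.exp b := by
  have h1 : Real.exp a = Real.exp (a / 2) ^ 2 := by rw [← Real.exp_nat_mul]; ring_nf
  have h2 : Real.exp b = Real.exp (b / 2) ^ 2 := by rw [← Real.exp_nat_mul]; ring_nf
  have h3 : Real.exp (a / 2) - Real.exp (b / 2) ≠ 0 := fun h' =>
    h (by linarith [Real.exp_injective (sub_eq_zero.1 h')])
  rw [add_div, Real.exp_add, h1, h2]
  nlinarith [sq_pos_of_ne_zero h3]

lemma two_mul_ofReal (a : ℝ) : 2 * ENNReal.ofReal a = ENNReal.ofReal (2 * a) := by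
  rw [ENNReal.ofReal_mul zero_le_two, ENNReal.ofReal_ofNat]

/-- Strict midpoint convexity of `polarIntegral K`. -/
lemma polarIntegral_midpoint_lt (hK : IsCompact K) {z w : Euc n} (hzw : z ≠ w)
    (hm : polarIntegral K (midpoint ℝ z w) ≠ ∞) :
    2 * polarIntegral K (midpoint ℝ z w) < polarIntegral K z + polarIntegral K w := by
  unfold polarIntegral at hm ⊢
  rw [← lintegral_const_mul _ (measurable_polarIntegrand hK _),
    ← lintegral_add_left (measurable_polarIntegrand hK _)]
  refine lintegral_strict_mono (NeZero.ne _) ((measurable_polarIntegrand hK _).add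
    (measurable_polarIntegrand hK _)).aemeasurable ?_ ?_
  · rw [lintegral_const_mul _ (measurable_polarIntegrand hK _)]
    exact ENNReal.mul_ne_top (by simp) hm
  · filter_upwards [ae_inner_ne_zero (sub_ne_zero.2 hzw)] with y hy
    rw [inner_sub_right] at hy
    rw [← ENNReal.ofReal_add (Real.exp_pos _).le (Real.exp_pos _).le,
      two_mul_ofReal,
      ENNReal.ofReal_lt_ofReal_iff (by positivity)]
    convert exp_midpoint_lt (a := ⟪y, z⟫ - supportFn K y) (b := ⟪y, w⟫ - supportFn K y)
      (fun h => hy (by linarith)) using 3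
    rw [midpoint_eq_smul_add, real_inner_smul_right, inner_add_right, invOf_eq_inv]
    ring

/-! ### Hausdorff convergence -/

section Convergence

variable {ι : Type*} {l : Filter ι} {A : ι → Set (Euc n)} {K₀ : Set (Euc n)}

lemma tendsto_supportFn (hA : ∀ j, IsConvexBody (A j)) (hK₀ : IsConvexBody K₀)
    (hconv : Tendsto (fun j => hausdorffDist (A j) K₀) l (𝓝 0)) (y : Euc n) :
    Tendsto (fun j => supportFn (A j) y) l (𝓝 (supportFn K₀ y)) := by
  rw [tendsto_iff_dist_tendsto_zero]
  refine squeeze_zero (fun _ => dist_nonneg) (fun j => ?_) (by simpa using hconv.const_mul ‖y‖)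
  exact abs_supportFn_sub_le (hA j).1 hK₀.1 ((hA j).2.2.mono interior_subset)
    (hK₀.2.2.mono interior_subset) y

/-- Bodies close to `K₀` contain a common ball around a given interior point of `K₀`. -/
lemma exists_closedBall_subset (hA : ∀ j, IsConvexBody (A j)) (hK₀ : IsConvexBody K₀)
    (hconv : Tendsto (fun j => hausdorffDist (A j) K₀) l (𝓝 0)) {z : Euc n}
    (hz : z ∈ interior K₀) : ∃ r > 0, ∀ᶠ j in l, closedBall z r ⊆ A j := by
  obtain ⟨r, hr, hball⟩ := nhds_basis_closedBall.mem_iff.1 (mem_interior_iff_mem_nhds.1 hz)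
  refine ⟨r / 2, by positivity, ?_⟩
  filter_upwards [hconv.eventually_le_const (half_pos hr)] with j hj
  have hne := (hA j).2.2.mono interior_subset
  refine closedBall_subset_of_supportFn_ge (hA j).1 (hA j).2.1 hne fun y => ?_
  have h1 := supportFn_ge_of_closedBall_subset hK₀.1 hr.le hball y
  have h2 := (abs_le.1 (abs_supportFn_sub_le (hA j).1 hK₀.1 hne
    (hK₀.2.2.mono interior_subset) y)).1
  nlinarith [norm_nonneg y]

/-- Continuity of `polarIntegral` in the body, at a fixed interior point. -/
lemma tendsto_polarIntegral [l.IsCountablyGenerated] (hA : ∀ j, IsConvexBody (A j))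
    (hK₀ : IsConvexBody K₀) (hconv : Tendsto (fun j => hausdorffDist (A j) K₀) l (𝓝 0))
    {z : Euc n} (hz : z ∈ interior K₀) :
    Tendsto (fun j => polarIntegral (A j) z) l (𝓝 (polarIntegral K₀ z)) := by
  obtain ⟨r, hr, hball⟩ := exists_closedBall_subset hA hK₀ hconv hz
  refine tendsto_lintegral_filter_of_dominated_convergence
    (fun y => ENNReal.ofReal (Real.exp (-(r * ‖y‖))))
    (Eventually.of_forall fun j => measurable_polarIntegrand (hA j).1 z) ?_
    (lintegral_exp_neg_mul_norm_ne_top hr) (ae_of_all _ fun y => ?_)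
  · filter_upwards [hball] with j hj
    refine ae_of_all _ fun y => ENNReal.ofReal_le_ofReal (Real.exp_le_exp.2 ?_)
    linarith [supportFn_ge_of_closedBall_subset (hA j).1 hr.le hj y]
  · exact ENNReal.tendsto_ofReal ((Real.continuous_exp.tendsto _).comp
      (tendsto_const_nhds.sub (tendsto_supportFn hA hK₀ hconv y)))

/-- Joint lower semicontinuity of `polarIntegral`. -/
lemma polarIntegral_le_liminf [l.IsCountablyGenerated] [l.NeBot] (hA : ∀ j, IsConvexBody (A j))
    (hK₀ : IsConvexBody K₀) (hconv : Tendsto (fun j => hausdorffDist (A j) K₀) l (𝓝 0))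
    {p : ι → Euc n} {z : Euc n} (hp : Tendsto p l (𝓝 z)) :
    polarIntegral K₀ z ≤ liminf (fun j => polarIntegral (A j) (p j)) l := by
  refine le_trans (le_of_eq (lintegral_congr fun y => ?_))
    (lintegral_liminf_le fun j => measurable_polarIntegrand (hA j).1 (p j))
  refine (Tendsto.liminf_eq (ENNReal.tendsto_ofReal ((Real.continuous_exp.tendsto _).comp
    (Tendsto.sub ?_ (tendsto_supportFn hA hK₀ hconv y))))).symm
  exact tendsto_const_nhds.inner hp

/-- Every limit of Santaló points is the Santaló point of the limit body. -/
lemma eq_of_tendsto_santalo [l.IsCountablyGenerated] [l.NeBot] (hA : ∀ j, IsConvexBody (A j))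
    (hK₀ : IsConvexBody K₀) (hconv : Tendsto (fun j => hausdorffDist (A j) K₀) l (𝓝 0))
    {p : ι → Euc n} (hp : ∀ j, IsSantaloPoint (A j) (p j)) {s₀ : Euc n}
    (hs₀ : IsSantaloPoint K₀ s₀) {z : Euc n} (hz : Tendsto p l (𝓝 z)) : z = s₀ := by
  have hne₀ : K₀.Nonempty := hK₀.2.2.mono interior_subset
  have hzK : z ∈ K₀ := by
    refine mem_of_inner_le_supportFn hK₀.1 hK₀.2.1 hne₀ fun y => ?_
    exact le_of_tendsto_of_tendsto' (tendsto_const_nhds.inner hz)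
      (tendsto_supportFn hA hK₀ hconv y)
      fun j => inner_le_supportFn (hA j).1 y (interior_subset (hp j).1)
  have hle : polarIntegral K₀ z ≤ polarIntegral K₀ s₀ := by
    obtain ⟨r, hr, hball⟩ := exists_closedBall_subset hA hK₀ hconv hs₀.1
    refine (polarIntegral_le_liminf hA hK₀ hconv hz).trans ?_
    rw [← (tendsto_polarIntegral hA hK₀ hconv hs₀.1).liminf_eq]
    refine liminf_le_liminf ?_
    filter_upwards [hball] with j hj
    exact (hp j).polarIntegral_le (hA j).1
      (mem_interior_iff_mem_nhds.2 (mem_of_superset (closedBall_mem_nhds _ hr) hj))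
  by_contra hne
  have hmid : midpoint ℝ z s₀ ∈ interior K₀ := by
    rw [midpoint_comm]
    refine hK₀.2.1.openSegment_interior_self_subset_interior hs₀.1 hzK ?_
    exact midpoint_mem_openSegment _ _
  have h1 := polarIntegral_midpoint_lt hK₀.1 hne (polarIntegral_ne_top hK₀.1 hmid)
  have h2 := hs₀.polarIntegral_le hK₀.1 hmid
  refine absurd h1 (not_lt.2 ?_)
  calc polarIntegral K₀ z + polarIntegral K₀ s₀
      ≤ 2 * polarIntegral K₀ s₀ := by rw [two_mul]; gcongr
    _ ≤ _ := by gcongr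

end Convergence

/-- The Santaló map is continuous with respect to the Hausdorff metric:
if convex bodies `K j` converge to `K₀` in Hausdorff distance, then their
Santaló points converge to the Santaló point of `K₀`. -/
theorem santalo_map_continuous (n : ℕ) (K : ℕ → Set (Euc n)) (K₀ : Set (Euc n))
    (hK : ∀ j, IsConvexBody (K j)) (hK₀ : IsConvexBody K₀)
    (hconv : Filter.Tendsto (fun j => hausdorffDist (K j) K₀) Filter.atTop (nhds 0))
    (s : ℕ → Euc n) (s₀ : Euc n)
    (hs : ∀ j, IsSantaloPoint (K j) (s j)) (hs₀ : IsSantaloPoint K₀ s₀) :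
    Filter.Tendsto s Filter.atTop (nhds s₀) := by
  have hbdd : ∀ᶠ j in atTop, s j ∈ cthickening 1 K₀ := by
    filter_upwards [hconv.eventually_le_const one_pos] with j hj
    have hne := (hK j).2.2.mono interior_subset
    have hne₀ := hK₀.2.2.mono interior_subset
    obtain ⟨x, hx, hd⟩ := hK₀.1.exists_infDist_eq_dist hne₀ (s j)
    refine mem_cthickening_of_dist_le _ x _ _ hx (hd ▸ le_trans ?_ hj)
    exact infDist_le_hausdorffDist_of_mem (interior_subset (hs j).1)
      (hausdorffEDist_ne_top_of_nonempty_of_bounded hne hne₀ (hK j).1.isBounded hK₀.1.isBounded)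
  refine tendsto_of_subseq_tendsto fun ns hns => ?_
  obtain ⟨z, -, φ, hφ, hz⟩ := hK₀.1.cthickening.tendsto_subseq' (hns.eventually hbdd).frequently
  have hlim : Tendsto (fun i => ns (φ i)) atTop atTop := hns.comp hφ.tendsto_atTop
  refine ⟨φ, ?_⟩
  rw [← eq_of_tendsto_santalo (fun i => hK (ns (φ i))) hK₀ (hconv.comp hlim)
    (fun i => hs (ns (φ i))) hs₀ hz]
  exact hz
end
end

section
/- Let F be a face of Δ_n and suppose (1 − δ)Δ_n ⊂ K ⊂ Δ_n for some 0 < δ < 1, where K is a convex body. Then the tangency points of the construction satisfy the duality relations ⟨x_F, x_F^*⟩ = 1 and ⟨y_F, y_F^*⟩ = 1. Moreover, if t > 0 is such that x_F ∈ tH_F ∩ ∂K, then the corresponding tangency parameter for F^* and K° equals 1/t, i.e., x_F^* ∈ (1/t)H_{F^*} ∩ ∂K°. -/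
/-!
Write `c` for the centroid of `F` and `c* = c / ‖c‖²`. The inner products `⟪v j, c⟫` are `‖c‖²` for
`j ∈ s` and negative otherwise, so `c*` lies in the relative interior of `F*`. Consequently
`c* + ε a ∈ F*` for every `a ∈ F^⊥` and small `ε > 0`, which makes `F^⊥` orthogonal to `(F*)^⊥`, and
`⟪x, x'⟫ = r r'` whenever `x ∈ r H_F` and `x' ∈ r' H_{F*}` (`inner_of_mem_vadd`). With `x ∈ K` and
`x' ∈ K°` this gives `t t' ≤ 1`.

For the reverse inequality, maximality of `t` means that `t H_F` misses the interior of `K`, so a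
hyperplane separates the two. The separating functional is constant on `t H_F` and, suitably
normalized, is represented by a vector of `K°`; this vector lies in `(1/t) H_{F*}`
(`exists_mem_polar`), so `1/t ≤ t'` by maximality of `t'`. Hence `t t' = 1`, and both inner products
in the conclusion equal `t t'`.
-/

open MeasureTheory Metric Set Pointwise RealInnerProductSpace

noncomputable section

/-- `v` lists the vertices of a regular simplex inscribed in the unit sphere:
unit vectors with pairwise inner products `−1/n`. -/
def IsRegularSimplex {n : ℕ} (v : Fin (n + 1) → Euc n) : Prop :=
  (∀ i, ‖v i‖ = 1) ∧ ∀ i j, i ≠ j → ⟪v i, v j⟫ = -(1 / (n : ℝ))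

/-- The simplex with vertex set `v`. -/
def simplexHull {n : ℕ} (v : Fin (n + 1) → Euc n) : Set (Euc n) :=
  convexHull ℝ (Set.range v)

/-- The face of the simplex spanned by the vertices indexed by `s`. -/
def faceOf {n : ℕ} (v : Fin (n + 1) → Euc n) (s : Finset (Fin (n + 1))) : Set (Euc n) :=
  convexHull ℝ (v '' ↑s)

/-- The centroid of the face spanned by the vertices indexed by `s`. -/
def centroidOf {n : ℕ} (v : Fin (n + 1) → Euc n) (s : Finset (Fin (n + 1))) : Euc n :=
  (s.card : ℝ)⁻¹ • ∑ i ∈ s, v i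

/-- `F^⊥ = {y : ⟨x, y⟩ = 0 for all x ∈ F}`. -/
def perpOf {n : ℕ} (F : Set (Euc n)) : Set (Euc n) :=
  {y | ∀ x ∈ F, ⟪x, y⟫ = 0}

/-- The dual face `F^* = {y ∈ Δₙ° : ⟨x, y⟩ = 1 for all x ∈ F}` of the face of the
simplex indexed by `s`. -/
def dualFace {n : ℕ} (v : Fin (n + 1) → Euc n) (s : Finset (Fin (n + 1))) : Set (Euc n) :=
  {y ∈ polarAt (simplexHull v) 0 | ∀ x ∈ faceOf v s, ⟪x, y⟫ = 1}

/-- The centroid `c_{F^*} = c_F / ‖c_F‖²` of the dual face. -/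
def dualCentroid {n : ℕ} (v : Fin (n + 1) → Euc n) (s : Finset (Fin (n + 1))) : Euc n :=
  (‖centroidOf v s‖ ^ 2)⁻¹ • centroidOf v s

/-- `x` is a tangency point of the family of affine subspaces `t'·c + F^⊥` with the
body `K`: the parameter `t` is maximal so that `t·c + F^⊥` meets `K`, and
`x ∈ (t·c + F^⊥) ∩ ∂K`. -/
def IsTangency {n : ℕ} (F : Set (Euc n)) (c : Euc n) (K : Set (Euc n))
    (t : ℝ) (x : Euc n) : Prop :=
  0 < t ∧ x ∈ frontier K ∧ x ∈ (t • c) +ᵥ perpOf F ∧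
    ∀ t' : ℝ, (((t' • c) +ᵥ perpOf F) ∩ K).Nonempty → t' ≤ t

/-! ### Inner products of vertices and centroids -/

lemma inner_sum_vertices {n : ℕ} {v : Fin (n + 1) → Euc n}
    (hv : IsRegularSimplex v) (s : Finset (Fin (n + 1))) (j : Fin (n + 1)) :
    ⟪v j, ∑ i ∈ s, v i⟫ = (if j ∈ s then 1 + 1 / (n : ℝ) else 0) - s.card / n := by
  have h : ∀ i, ⟪v j, v i⟫ = (if j = i then 1 + 1 / (n : ℝ) else 0) - 1 / n := by
    intro i
    by_cases hji : j = i
    · subst hji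
      simp [hv.1 j]
    · simp [hji, hv.2 j i hji]
  rw [inner_sum, Finset.sum_congr rfl fun i _ => h i, Finset.sum_sub_distrib, Finset.sum_ite_eq]
  simp [div_eq_mul_inv]

lemma sum_vertices {n : ℕ} (hn : 0 < n) {v : Fin (n + 1) → Euc n}
    (hv : IsRegularSimplex v) : ∑ i, v i = 0 := by
  have hn' : (n : ℝ) ≠ 0 := by positivity
  rw [← inner_self_eq_zero (𝕜 := ℝ), sum_inner]
  refine Finset.sum_eq_zero fun j _ => ?_
  rw [inner_sum_vertices hv]
  simp
  field_simp
  ring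

lemma inner_vertex_centroid {n : ℕ} (hn : 0 < n) {v : Fin (n + 1) → Euc n}
    (hv : IsRegularSimplex v) {s : Finset (Fin (n + 1))} (hcard : 0 < s.card)
    (j : Fin (n + 1)) :
    ⟪v j, centroidOf v s⟫ =
      if j ∈ s then ((n : ℝ) + 1 - s.card) / (n * s.card) else -(1 / (n : ℝ)) := by
  have hn' : (n : ℝ) ≠ 0 := by positivity
  have hs' : (s.card : ℝ) ≠ 0 := by positivity
  rw [centroidOf, inner_smul_right, inner_sum_vertices hv]
  split_ifs
  · field_simp
  · field_simp
    ring

lemma norm_centroid_sq {n : ℕ} (hn : 0 < n) {v : Fin (n + 1) → Euc n}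
    (hv : IsRegularSimplex v) {s : Finset (Fin (n + 1))} (hcard : 0 < s.card) :
    ‖centroidOf v s‖ ^ 2 = ((n : ℝ) + 1 - s.card) / (n * s.card) := by
  have hs' : (s.card : ℝ) ≠ 0 := by positivity
  rw [← real_inner_self_eq_norm_sq]
  nth_rw 1 [centroidOf]
  rw [inner_smul_left, sum_inner, Finset.sum_congr rfl fun i hi => by
    rw [inner_vertex_centroid hn hv hcard, if_pos hi], Finset.sum_const, nsmul_eq_mul]
  simp [hs']

lemma norm_centroid_sq_pos {n : ℕ} (hn : 0 < n) {v : Fin (n + 1) → Euc n}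
    (hv : IsRegularSimplex v) {s : Finset (Fin (n + 1))} (hcard : 0 < s.card)
    (hcard' : s.card ≤ n) : 0 < ‖centroidOf v s‖ ^ 2 := by
  rw [norm_centroid_sq hn hv hcard]
  have : (s.card : ℝ) ≤ n := by exact_mod_cast hcard'
  have h1 : (0 : ℝ) < n + 1 - s.card := by linarith
  positivity

lemma inner_vertex_dualCentroid {n : ℕ} (hn : 0 < n) {v : Fin (n + 1) → Euc n}
    (hv : IsRegularSimplex v) {s : Finset (Fin (n + 1))} (hcard : 0 < s.card)
    (hcard' : s.card ≤ n) {j : Fin (n + 1)} (hj : j ∈ s) :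
    ⟪v j, dualCentroid v s⟫ = 1 := by
  have h := norm_centroid_sq_pos hn hv hcard hcard'
  rw [dualCentroid, inner_smul_right, inner_vertex_centroid hn hv hcard, if_pos hj,
    ← norm_centroid_sq hn hv hcard]
  exact inv_mul_cancel₀ h.ne'

lemma inner_vertex_dualCentroid_neg {n : ℕ} (hn : 0 < n) {v : Fin (n + 1) → Euc n}
    (hv : IsRegularSimplex v) {s : Finset (Fin (n + 1))} (hcard : 0 < s.card)
    (hcard' : s.card ≤ n) {j : Fin (n + 1)} (hj : j ∉ s) :
    ⟪v j, dualCentroid v s⟫ < 0 := by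
  have h := norm_centroid_sq_pos hn hv hcard hcard'
  rw [dualCentroid, inner_smul_right, inner_vertex_centroid hn hv hcard, if_neg hj]
  have hn' : (0 : ℝ) < 1 / n := by positivity
  exact mul_neg_of_pos_of_neg (inv_pos.2 h) (by linarith)

lemma centroid_mem_face {n : ℕ} {v : Fin (n + 1) → Euc n} {s : Finset (Fin (n + 1))}
    (hcard : 0 < s.card) : centroidOf v s ∈ faceOf v s := by
  have hs' : (s.card : ℝ) ≠ 0 := by positivity
  rw [centroidOf, Finset.smul_sum]
  refine (convex_convexHull ℝ _).sum_mem (fun _ _ => by positivity) ?_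
    fun i hi => subset_convexHull ℝ _ (mem_image_of_mem v hi)
  simp [hs']

/-! ### The dual face and orthogonality -/

/-- A linear condition on the vertices of a hull holds on the whole hull. -/
lemma inner_eq_of_mem_convexHull {n : ℕ} {A : Set (Euc n)} {y : Euc n} {r : ℝ}
    (h : ∀ a ∈ A, ⟪a, y⟫ = r) : ∀ x ∈ convexHull ℝ A, ⟪x, y⟫ = r := by
  have hc : Convex ℝ {x : Euc n | ⟪x, y⟫ = r} := by
    intro a ha b hb p q _ _ hpq
    simp only [mem_ofPred_eq, inner_add_left, real_inner_smul_left] at *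
    rw [ha, hb, ← add_mul, hpq, one_mul]
  exact fun x hx => convexHull_min h hc hx

lemma inner_le_of_mem_convexHull {n : ℕ} {A : Set (Euc n)} {y : Euc n} {r : ℝ}
    (h : ∀ a ∈ A, ⟪a, y⟫ ≤ r) : ∀ x ∈ convexHull ℝ A, ⟪x, y⟫ ≤ r := by
  have hc : Convex ℝ {x : Euc n | ⟪x, y⟫ ≤ r} := by
    intro a ha b hb p q hp hq hpq
    simp only [mem_ofPred_eq, inner_add_left, real_inner_smul_left] at *
    have hr : p * r + q * r = r := by rw [← add_mul, hpq, one_mul]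
    linarith [mul_le_mul_of_nonneg_left ha hp, mul_le_mul_of_nonneg_left hb hq]
  exact fun x hx => convexHull_min h hc hx

lemma mem_dualFace_of_vertices {n : ℕ} {v : Fin (n + 1) → Euc n} {s : Finset (Fin (n + 1))}
    {y : Euc n} (h1 : ∀ i ∈ s, ⟪v i, y⟫ = 1) (h2 : ∀ i, i ∉ s → ⟪v i, y⟫ ≤ 1) :
    y ∈ dualFace v s := by
  refine ⟨fun x hx => ?_, inner_eq_of_mem_convexHull ?_⟩
  · rw [sub_zero, real_inner_comm]
    refine inner_le_of_mem_convexHull ?_ x hx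
    rintro _ ⟨i, rfl⟩
    by_cases hi : i ∈ s
    · exact (h1 i hi).le
    · exact h2 i hi
  · rintro _ ⟨i, hi, rfl⟩
    exact h1 i hi

lemma vertex_mem_face {n : ℕ} {v : Fin (n + 1) → Euc n} {s : Finset (Fin (n + 1))}
    {i : Fin (n + 1)} (hi : i ∈ s) : v i ∈ faceOf v s :=
  subset_convexHull ℝ _ (mem_image_of_mem v hi)

/-- `c*` is a relative interior point of the dual face: it can be moved slightly in any direction
orthogonal to `F` without leaving `F*`. -/
lemma exists_dualCentroid_add_mem {n : ℕ} (hn : 0 < n) {v : Fin (n + 1) → Euc n}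
    (hv : IsRegularSimplex v) {s : Finset (Fin (n + 1))} (hcard : 0 < s.card)
    (hcard' : s.card ≤ n) {a : Euc n} (ha : a ∈ perpOf (faceOf v s)) :
    ∃ ε : ℝ, 0 < ε ∧ dualCentroid v s + ε • a ∈ dualFace v s := by
  have hε : (0 : ℝ) < (‖a‖ + 1)⁻¹ := by positivity
  refine ⟨(‖a‖ + 1)⁻¹, hε, mem_dualFace_of_vertices (fun i hi => ?_) (fun i hi => ?_)⟩
  · rw [inner_add_right, inner_smul_right, inner_vertex_dualCentroid hn hv hcard hcard' hi,
      ha _ (vertex_mem_face hi)]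
    simp
  · rw [inner_add_right, inner_smul_right]
    have h1 := inner_vertex_dualCentroid_neg hn hv hcard hcard' hi
    have h2 : ⟪v i, a⟫ ≤ ‖a‖ + 1 := by
      have := real_inner_le_norm (v i) a
      rw [hv.1 i] at this
      linarith
    have h3 : (‖a‖ + 1)⁻¹ * ⟪v i, a⟫ ≤ 1 := by
      rw [inv_mul_le_iff₀ (by positivity)]
      linarith
    linarith

lemma dualCentroid_mem_dualFace {n : ℕ} (hn : 0 < n) {v : Fin (n + 1) → Euc n}
    (hv : IsRegularSimplex v) {s : Finset (Fin (n + 1))} (hcard : 0 < s.card)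
    (hcard' : s.card ≤ n) : dualCentroid v s ∈ dualFace v s := by
  obtain ⟨ε, _, h⟩ := exists_dualCentroid_add_mem hn hv hcard hcard' (a := 0)
    fun x _ => inner_zero_right x
  simpa using h

lemma inner_centroid_dualCentroid {n : ℕ} (hn : 0 < n) {v : Fin (n + 1) → Euc n}
    (hv : IsRegularSimplex v) {s : Finset (Fin (n + 1))} (hcard : 0 < s.card)
    (hcard' : s.card ≤ n) : ⟪centroidOf v s, dualCentroid v s⟫ = 1 :=
  (dualCentroid_mem_dualFace hn hv hcard hcard').2 _ (centroid_mem_face hcard)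

lemma inner_perp_perp {n : ℕ} (hn : 0 < n) {v : Fin (n + 1) → Euc n}
    (hv : IsRegularSimplex v) {s : Finset (Fin (n + 1))} (hcard : 0 < s.card)
    (hcard' : s.card ≤ n) {a b : Euc n} (ha : a ∈ perpOf (faceOf v s))
    (hb : b ∈ perpOf (dualFace v s)) : ⟪a, b⟫ = 0 := by
  obtain ⟨ε, hε, h⟩ := exists_dualCentroid_add_mem hn hv hcard hcard' ha
  have h1 := hb _ h
  rw [inner_add_left, real_inner_smul_left,
    hb _ (dualCentroid_mem_dualFace hn hv hcard hcard'), zero_add] at h1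
  exact (mul_eq_zero.1 h1).resolve_left hε.ne'

/-- Points of `r H_F` and `r' H_{F*}` always have inner product `r r'`. -/
lemma inner_of_mem_vadd {n : ℕ} (hn : 0 < n) {v : Fin (n + 1) → Euc n}
    (hv : IsRegularSimplex v) {s : Finset (Fin (n + 1))} (hcard : 0 < s.card)
    (hcard' : s.card ≤ n) {r r' : ℝ} {x x' : Euc n}
    (hx : x ∈ (r • centroidOf v s) +ᵥ perpOf (faceOf v s))
    (hx' : x' ∈ (r' • dualCentroid v s) +ᵥ perpOf (dualFace v s)) : ⟪x, x'⟫ = r * r' := by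
  obtain ⟨a, ha, rfl⟩ := hx
  obtain ⟨b, hb, rfl⟩ := hx'
  have h1 : ⟪centroidOf v s, b⟫ = 0 := by
    have := hb _ (dualCentroid_mem_dualFace hn hv hcard hcard')
    rw [dualCentroid, real_inner_smul_left] at this
    exact (mul_eq_zero.1 this).resolve_left
      (inv_ne_zero (norm_centroid_sq_pos hn hv hcard hcard').ne')
  have h2 : ⟪a, dualCentroid v s⟫ = 0 := by
    rw [dualCentroid, inner_smul_right, real_inner_comm, ha _ (centroid_mem_face hcard), mul_zero]
  simp only [vadd_eq_add, inner_add_left, inner_add_right, real_inner_smul_left,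
    inner_smul_right, h1, h2, inner_perp_perp hn hv hcard hcard' ha hb,
    inner_centroid_dualCentroid hn hv hcard hcard']
  ring

/-! ### Separation -/

lemma smul_mem_perpOf {n : ℕ} {F : Set (Euc n)} {w : Euc n} (hw : w ∈ perpOf F) (r : ℝ) :
    r • w ∈ perpOf F := fun x hx => by rw [inner_smul_right, hw x hx, mul_zero]

/-- A linear functional that is constant on `t H_F`, with value `1` there, is represented by a
vector of `(1/t) H_{F*}`. -/
lemma mem_vadd_dual {n : ℕ} (hn : 0 < n) {v : Fin (n + 1) → Euc n}
    (hv : IsRegularSimplex v) {s : Finset (Fin (n + 1))} (hcard : 0 < s.card)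
    (hcard' : s.card ≤ n) {t : ℝ} (ht : 0 < t) {z : Euc n}
    (hz : ∀ w ∈ perpOf (faceOf v s), ⟪z, w⟫ = 0) (hzc : ⟪z, t • centroidOf v s⟫ = 1) :
    z ∈ ((1 / t) • dualCentroid v s) +ᵥ perpOf (dualFace v s) := by
  refine ⟨z - (1 / t) • dualCentroid v s, fun y hy => ?_, by simp⟩
  have h1 : ⟪z, y - dualCentroid v s⟫ = 0 := hz _ fun x hx => by
    rw [inner_sub_right, hy.2 x hx,
      (dualCentroid_mem_dualFace hn hv hcard hcard').2 x hx, sub_self]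
  have h2 : ⟪centroidOf v s, y⟫ = 1 := hy.2 _ (centroid_mem_face hcard)
  rw [inner_smul_right] at hzc
  have h3 : ⟪z, centroidOf v s⟫ = 1 / t := by
    field_simp
    linarith
  rw [inner_sub_right, sub_eq_zero, dualCentroid, inner_smul_right, h3] at h1
  rw [inner_sub_right, inner_smul_right, real_inner_comm, h1, dualCentroid, inner_smul_right,
    real_inner_comm, h2]
  ring

/-- Maximality of `t` forces `t H_F` to miss the interior of `K`: an interior point could be pushed
further in the direction `c`. -/
lemma notMem_interior {n : ℕ} {F K : Set (Euc n)} {c x : Euc n} {t : ℝ}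
    (hmax : ∀ t' : ℝ, (((t' • c) +ᵥ perpOf F) ∩ K).Nonempty → t' ≤ t)
    (hx : x ∈ (t • c) +ᵥ perpOf F) : x ∉ interior K := by
  intro hxi
  have hcont : Filter.Tendsto (fun ε : ℝ => x + ε • c) (nhdsWithin 0 (Ioi 0)) (nhds x) := by
    have : Continuous fun ε : ℝ => x + ε • c := by fun_prop
    simpa using (this.tendsto 0).mono_left nhdsWithin_le_nhds
  obtain ⟨ε, hεK, hε⟩ :=
    ((hcont.eventually (mem_interior_iff_mem_nhds.1 hxi)).and self_mem_nhdsWithin).exists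
  obtain ⟨w, hw, rfl⟩ := hx
  have := hmax (t + ε) ⟨_, ⟨w, hw, rfl⟩, by
    have heq : (t + ε) • c + w = t • c + w + ε • c := by
      rw [add_smul]
      abel
    simp only [vadd_eq_add] at hεK ⊢
    rw [heq]
    exact hεK⟩
  have hε' : 0 < ε := hε
  linarith

/-- A hyperplane `f = u` bounding `K` and missing its interior has a positive level `u`. Otherwise
`f ≤ 0` at the vertices, which sum to zero, so `f` would vanish on the whole simplex. -/
lemma level_pos {n : ℕ} (hn : 0 < n) {v : Fin (n + 1) → Euc n} (hv : IsRegularSimplex v)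
    {K : Set (Euc n)} (hKi : (interior K).Nonempty) {δ : ℝ} (hδ1 : δ < 1)
    (hKl : (1 - δ) • simplexHull v ⊆ K) (hKu : K ⊆ simplexHull v)
    {f : Euc n →L[ℝ] ℝ} {u : ℝ} (hfi : ∀ a ∈ interior K, f a < u) (hfK : ∀ a ∈ K, f a ≤ u) :
    0 < u := by
  by_contra! hu
  have hle : ∀ i, f (v i) ≤ 0 := fun i => by
    have := hfK _ (hKl (smul_mem_smul_set (subset_convexHull ℝ _ (mem_range_self i))))
    rw [map_smul, smul_eq_mul] at this
    by_contra! h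
    nlinarith [mul_pos (sub_pos.2 hδ1) h]
  have hsum : ∑ i, f (v i) = 0 := by rw [← map_sum, sum_vertices hn hv, map_zero]
  have hzero := (Finset.sum_eq_zero_iff_of_nonpos fun i _ => hle i).1 hsum
  obtain ⟨a, ha⟩ := hKi
  have hfa : f a = 0 := by
    have hsub : simplexHull v ⊆ (LinearMap.ker f.toLinearMap : Set (Euc n)) := by
      refine convexHull_min ?_ (Submodule.convex _)
      rintro _ ⟨i, rfl⟩
      exact hzero i (Finset.mem_univ i)
    exact hsub (hKu (interior_subset ha))
  linarith [hfi a ha]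

/-- If `t H_F` is tangent to `K`, then `(1/t) H_{F*}` meets `K°`, in the normalized normal vector of
a hyperplane separating `t H_F` from `K`. -/
lemma exists_mem_polar {n : ℕ} (hn : 0 < n) {v : Fin (n + 1) → Euc n} (hv : IsRegularSimplex v)
    {s : Finset (Fin (n + 1))} (hcard : 0 < s.card) (hcard' : s.card ≤ n)
    {K : Set (Euc n)} (hK : IsConvexBody K) {δ : ℝ} (hδ1 : δ < 1)
    (hKl : (1 - δ) • simplexHull v ⊆ K) (hKu : K ⊆ simplexHull v) {t : ℝ} (ht : 0 < t)
    (hmax : ∀ t' : ℝ, (((t' • centroidOf v s) +ᵥ perpOf (faceOf v s)) ∩ K).Nonempty → t' ≤ t) :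
    ((((1 / t) • dualCentroid v s) +ᵥ perpOf (dualFace v s)) ∩ polarAt K 0).Nonempty := by
  obtain ⟨-, hKconv, hKi⟩ := hK
  have hconv : Convex ℝ ((t • centroidOf v s) +ᵥ perpOf (faceOf v s)) := by
    refine Convex.vadd (fun a ha b hb p q _ _ _ x hx => ?_) _
    rw [inner_add_right, inner_smul_right, inner_smul_right, ha x hx, hb x hx]
    ring
  obtain ⟨f, u, hfi, hfH⟩ := geometric_hahn_banach_open hKconv.interior isOpen_interior hconv
    (Set.disjoint_left.2 fun x hxi hxH => notMem_interior hmax hxH hxi)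
  have hfK : ∀ a ∈ K, f a ≤ u := by
    intro a ha
    have hcl : closure (interior K) ⊆ {a | f a ≤ u} :=
      closure_minimal (fun a ha => (hfi a ha).le) (isClosed_le f.continuous continuous_const)
    rw [hKconv.closure_interior_eq_closure_of_nonempty_interior hKi] at hcl
    exact hcl (subset_closure ha)
  have hu := level_pos hn hv hKi hδ1 hKl hKu hfi hfK
  have hfH' : ∀ w ∈ perpOf (faceOf v s), u ≤ f (t • centroidOf v s) + f w := fun w hw => by
    rw [← map_add]
    exact hfH _ ⟨w, hw, rfl⟩
  set m := f (t • centroidOf v s) with hm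
  -- A functional bounded below on a translate of a linear subspace vanishes on the subspace.
  have hf0 : ∀ w ∈ perpOf (faceOf v s), f w = 0 := by
    intro w hw
    by_contra hne
    have := hfH' _ (smul_mem_perpOf hw ((u - 1 - m) / f w))
    rw [map_smul, smul_eq_mul, div_mul_cancel₀ _ hne] at this
    linarith
  have hfc : u ≤ m := by
    simpa using hfH' 0 fun x _ => inner_zero_right x
  have hmpos : 0 < m := hu.trans_le hfc
  have hinner : ∀ x, ⟪m⁻¹ • (InnerProductSpace.toDual ℝ (Euc n)).symm f, x⟫ = m⁻¹ * f x := by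
    intro x
    rw [real_inner_smul_left, InnerProductSpace.toDual_symm_apply]
  refine ⟨m⁻¹ • (InnerProductSpace.toDual ℝ (Euc n)).symm f,
    mem_vadd_dual hn hv hcard hcard' ht (fun w hw => ?_) ?_, fun x hx => ?_⟩
  · rw [hinner, hf0 w hw, mul_zero]
  · rw [hinner, ← hm, inv_mul_cancel₀ hmpos.ne']
  · rw [sub_zero, hinner, inv_mul_le_iff₀ hmpos, mul_one]
    exact (hfK x hx).trans hfc

/-- Duality of the tangency points: `⟨x_F, x_F^*⟩ = 1 = ⟨y_F, y_F^*⟩`, and the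
tangency parameter for the dual construction is `1/t`. -/
theorem tangency_points_duality (n : ℕ) (hn : 0 < n) (v : Fin (n + 1) → Euc n)
    (hv : IsRegularSimplex v) (s : Finset (Fin (n + 1)))
    (hcard : 0 < s.card) (hcard' : s.card ≤ n)
    (K : Set (Euc n)) (hK : IsConvexBody K) (δ : ℝ) (hδ : 0 < δ) (hδ1 : δ < 1)
    (hKl : (1 - δ) • simplexHull v ⊆ K) (hKu : K ⊆ simplexHull v)
    (t : ℝ) (xF : Euc n)
    (hx : IsTangency (faceOf v s) (centroidOf v s) K t xF)
    (t' : ℝ) (xF' : Euc n)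
    (hx' : IsTangency (dualFace v s) (dualCentroid v s) (polarAt K 0) t' xF') :
    ⟪xF, xF'⟫ = 1 ∧
    ⟪t • centroidOf v s, t' • dualCentroid v s⟫ = 1 ∧
    t' = 1 / t := by
  obtain ⟨ht, hxf, hxm, hmax⟩ := hx
  obtain ⟨-, hxf', hxm', hmax'⟩ := hx'
  have hinner : ⟪xF, xF'⟫ = t * t' := inner_of_mem_vadd hn hv hcard hcard' hxm hxm'
  have hxK : xF ∈ K := hK.1.isClosed.frontier_subset hxf
  have hclosed : IsClosed (polarAt K 0) := by
    simp only [polarAt, ofPred_forall]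
    exact isClosed_biInter fun x _ => isClosed_le (by fun_prop) continuous_const
  have hle : t * t' ≤ 1 := by
    have := hclosed.frontier_subset hxf' xF hxK
    rwa [sub_zero, real_inner_comm, hinner] at this
  have hge : 1 / t ≤ t' := hmax' _ (exists_mem_polar hn hv hcard hcard' hK hδ1 hKl hKu ht hmax)
  have hprod : t * t' = 1 := by
    rw [div_le_iff₀ ht] at hge
    linarith
  refine ⟨hinner.trans hprod, ?_, ?_⟩
  · rw [real_inner_smul_left, inner_smul_right,
      inner_centroid_dualCentroid hn hv hcard hcard', mul_one, hprod]
  · rw [eq_div_iff ht.ne', mul_comm, hprod]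
end
end

section
/- Let 0 < δ < 1 and, for each proper face F of Δ_n, let t_F ∈ [1 − δ, 1]. Define Q = ⋃_flags conv(0, t_{F_0}·c_{F_0}, …, t_{F_{n−1}}·c_{F_{n−1}}) and Q' = ⋃_flags conv(0, (1/t_{F_0})·c_{F_0^*}, …, (1/t_{F_{n−1}})·c_{F_{n−1}^*}), where the unions run over all flags F_0 ⊂ F_1 ⊂ ⋯ ⊂ F_{n−1} of faces of Δ_n with dim F_k = k. Then vol(Q)·vol(Q') ≥ vol(Δ_n)·vol(Δ_n°). -/
/-!
The flag polytopes `Q` and `Q'` are both of the form `⋃ conv (0, r(F₀) v_{F₀}, …)` with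
`v_F = ∑ i ∈ F, v i` and positive weights `r`: since `‖c_F‖² = (n + 1 - m) / (n m)` for a face with
`m` vertices, `c_F = v_F / m` and `c_{F^*} = n v_F / (n + 1 - m)`.

Flags correspond to permutations `σ` of the vertices. The piece belonging to `σ` is the image of
the corner simplex `{b ≥ 0, ∑ b ≤ 1}` under the linear map with columns `r(F_k) v_{F_k}`, and it
lies in the cone `⟪x, v (σ 0)⟫ ≥ ⋯ ≥ ⟪x, v (σ n)⟫`. Hence distinct pieces overlap in a null set.
The Gram matrix of `(v_{F_k})` depends only on cardinalities, so the piece of `σ` has volume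
`κ ∏ k, r(F_k)` with `κ` independent of `σ`. This gives
`vol Q ≥ κ₁ ∑ σ, A σ` and `vol Q' ≥ κ₂ ∑ σ, (A σ)⁻¹` with `A σ = ∏ k, t(F_k)`
(`volume_flagPolytope_ge`), while the pieces with `t = 1` cover the simplex and its polar
(`exists_sorted`, `volume_le_of_cover`), so `vol Δₙ ≤ (n + 1)! κ₁` and `vol Δₙ° ≤ (n + 1)! κ₂`.
The Cauchy–Schwarz inequality `(∑ σ, A σ) (∑ σ, (A σ)⁻¹) ≥ (n + 1)! ^ 2` concludes.
-/

open MeasureTheory Metric Set Pointwise RealInnerProductSpace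

noncomputable section

/-- A flag of faces `F₀ ⊂ F₁ ⊂ ⋯ ⊂ F_{n−1}` of the simplex, recorded by the
index sets of their vertices: `g k` has `k+1` elements and the sets increase. -/
def IsFlag {n : ℕ} (g : Fin n → Finset (Fin (n + 1))) : Prop :=
  (∀ k : Fin n, (g k).card = (k : ℕ) + 1) ∧ ∀ j k : Fin n, j ≤ k → g j ⊆ g k

/-- The union, over all flags, of the convex hulls of `0` together with the
points `w(F₀), …, w(F_{n−1})` assigned to the faces of the flag. -/
def flagPolytope {n : ℕ} (w : Finset (Fin (n + 1)) → Euc n) : Set (Euc n) :=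
  ⋃ g ∈ {g : Fin n → Finset (Fin (n + 1)) | IsFlag g},
    convexHull ℝ (insert 0 (Set.range fun k : Fin n => w (g k)))

/-! ### Flags, permutations and simplicial pieces -/

/-- `∑ i ∈ s, v i`, the multiple `|s| • c_F` of the centroid of the face indexed by `s`. -/
def faceSum {n : ℕ} (v : Fin (n + 1) → Euc n) (s : Finset (Fin (n + 1))) : Euc n :=
  ∑ i ∈ s, v i

/-- The flag of the permutation `σ`: its `k`-th face is spanned by `σ 0, …, σ k`. -/
def permFlag {n : ℕ} (σ : Equiv.Perm (Fin (n + 1))) (k : Fin n) : Finset (Fin (n + 1)) :=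
  Finset.univ.filter fun i => σ.symm i ≤ k.castSucc

/-- The corner simplex `conv (0, e₀, …, e_{n-1})`, given by its inequalities. -/
def corner (n : ℕ) : Set (Euc n) :=
  {b | (∀ k, 0 ≤ b k) ∧ ∑ k, b k ≤ 1}

/-- The matrix with columns `w 0, …, w (n - 1)`. -/
def colMatrix {n : ℕ} (w : Fin n → Euc n) : Matrix (Fin n) (Fin n) ℝ :=
  Matrix.of fun i j => w j i

/-- The linear map sending the `k`-th basis vector to `w k`. -/
def colMap {n : ℕ} (w : Fin n → Euc n) : Euc n →ₗ[ℝ] Euc n :=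
  Matrix.toLin (EuclideanSpace.basisFun (Fin n) ℝ).toBasis
    (EuclideanSpace.basisFun (Fin n) ℝ).toBasis (colMatrix w)

/-- The simplex `conv (0, w 0, …, w (n - 1))`, as the image of the corner simplex. -/
def piece {n : ℕ} (w : Fin n → Euc n) : Set (Euc n) :=
  colMap w '' corner n

lemma colMap_apply {n : ℕ} (w : Fin n → Euc n) (b : Euc n) :
    colMap w b = ∑ k, b k • w k := by
  ext i
  simp [colMap, Matrix.toLin_apply, Matrix.mulVec, dotProduct, colMatrix, Pi.single_apply,
    mul_comm]

lemma corner_convex (n : ℕ) : Convex ℝ (corner n) := by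
  rintro x ⟨hx, hx1⟩ y ⟨hy, hy1⟩ a b ha hb hab
  refine ⟨fun k => ?_, ?_⟩
  · have := mul_nonneg ha (hx k)
    have := mul_nonneg hb (hy k)
    simp
    linarith
  · simp only [PiLp.add_apply, PiLp.smul_apply, smul_eq_mul, Finset.sum_add_distrib,
      ← Finset.mul_sum]
    nlinarith

lemma nullMeasurableSet_piece {n : ℕ} (w : Fin n → Euc n) :
    NullMeasurableSet (piece w) volume :=
  ((corner_convex n).linear_image _).nullMeasurableSet volume

lemma piece_subset {n : ℕ} (w : Fin n → Euc n) :
    piece w ⊆ convexHull ℝ (insert 0 (Set.range w)) := by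
  rintro _ ⟨b, ⟨hb, hb1⟩, rfl⟩
  rw [colMap_apply]
  have hc := convex_convexHull ℝ (insert 0 (Set.range w))
  have h0 : (0 : Euc n) ∈ convexHull ℝ (insert 0 (Set.range w)) :=
    subset_convexHull ℝ _ (by simp)
  -- the missing mass `1 - ∑ b` is carried by the vertex `0`
  have := hc.sum_mem (t := Finset.univ)
    (w := fun o : Option (Fin n) => o.elim (1 - ∑ k, b k) (fun k => b k))
    (z := fun o : Option (Fin n) => o.elim 0 w)
    (by rintro (_ | k) _
        · simpa using hb1
        · exact hb k)
    (by simp [Fintype.sum_option])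
    (by rintro (_ | k) _
        · exact h0
        · exact subset_convexHull ℝ _ (by simp))
  simpa [Fintype.sum_option] using this

lemma volume_piece {n : ℕ} (w : Fin n → Euc n) :
    volume (piece w) = ENNReal.ofReal |(colMatrix w).det| * volume (corner n) := by
  rw [piece, Measure.addHaar_image_linearMap, colMap, LinearMap.det_toLin]

lemma det_colMatrix_smul {n : ℕ} (r : Fin n → ℝ) (w : Fin n → Euc n) :
    (colMatrix fun k => r k • w k).det = (∏ k, r k) * (colMatrix w).det := by
  rw [← Matrix.det_mul_row]
  rfl

lemma det_colMatrix_sq {n : ℕ} (w : Fin n → Euc n) :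
    (colMatrix w).det ^ 2 = (Matrix.of fun j k => ⟪w j, w k⟫).det := by
  rw [sq]
  nth_rewrite 1 [← Matrix.det_transpose]
  rw [← Matrix.det_mul]
  congr 1
  ext j k
  simp [Matrix.mul_apply, colMatrix, PiLp.inner_apply, mul_comm]

lemma mem_permFlag {n : ℕ} (σ : Equiv.Perm (Fin (n + 1))) (k : Fin n) (i : Fin (n + 1)) :
    i ∈ permFlag σ k ↔ σ.symm i ≤ k.castSucc := by
  simp [permFlag]

lemma card_permFlag {n : ℕ} (σ : Equiv.Perm (Fin (n + 1))) (k : Fin n) :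
    (permFlag σ k).card = (k : ℕ) + 1 := by
  have : permFlag σ k = (Finset.Iic k.castSucc).map σ.toEmbedding := by
    ext i
    simp [mem_permFlag]
  rw [this, Finset.card_map, Fin.card_Iic]
  simp

lemma permFlag_mono {n : ℕ} (σ : Equiv.Perm (Fin (n + 1))) {j k : Fin n} (h : j ≤ k) :
    permFlag σ j ⊆ permFlag σ k := fun i hi => by
  rw [mem_permFlag] at *
  exact hi.trans (by simpa using h)

lemma isFlag_permFlag {n : ℕ} (σ : Equiv.Perm (Fin (n + 1))) : IsFlag (permFlag σ) :=
  ⟨card_permFlag σ, fun _ _ h => permFlag_mono σ h⟩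

/-! ### Inner products of vertex sums -/

lemma inner_faceSum_vertex {n : ℕ} {v : Fin (n + 1) → Euc n}
    (hv : IsRegularSimplex v) (s : Finset (Fin (n + 1))) (i : Fin (n + 1)) :
    ⟪faceSum v s, v i⟫ = (if i ∈ s then 1 + 1 / (n : ℝ) else 0) - s.card / n := by
  have h : ∀ j, ⟪v j, v i⟫ = (if i = j then 1 + 1 / (n : ℝ) else 0) - 1 / n := by
    intro j
    split_ifs with hij
    · subst hij
      rw [real_inner_self_eq_norm_sq, hv.1]
      ring
    · rw [hv.2 j i (Ne.symm hij)]
      ring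
  rw [faceSum, sum_inner, Finset.sum_congr rfl fun j _ => h j, Finset.sum_sub_distrib,
    Finset.sum_ite_eq]
  simp [div_eq_mul_inv]

lemma inner_faceSum {n : ℕ} {v : Fin (n + 1) → Euc n}
    (hv : IsRegularSimplex v) (s s' : Finset (Fin (n + 1))) :
    ⟪faceSum v s, faceSum v s'⟫ =
      (s' ∩ s).card * (1 + 1 / (n : ℝ)) - s'.card * (s.card / n) := by
  rw [faceSum.eq_1 v s', inner_sum,
    Finset.sum_congr rfl fun j _ => inner_faceSum_vertex hv s j, Finset.sum_sub_distrib,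
    ← Finset.sum_filter, Finset.filter_mem_eq_inter]
  simp only [Finset.sum_const, nsmul_eq_mul]

/-- The Gram matrix of `(v_{F_k})` depends only on the numbers `|F_j ∩ F_k|`, which are the same
for all flags. -/
lemma abs_det_permFlag {n : ℕ} {v : Fin (n + 1) → Euc n}
    (hv : IsRegularSimplex v) (σ τ : Equiv.Perm (Fin (n + 1))) :
    |(colMatrix fun k => faceSum v (permFlag σ k)).det| =
      |(colMatrix fun k => faceSum v (permFlag τ k)).det| := by
  rw [← sq_eq_sq_iff_abs_eq_abs, det_colMatrix_sq, det_colMatrix_sq]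
  congr 2
  ext j k
  simp only [inner_faceSum hv, card_permFlag]
  rcases le_total j k with h | h
  · rw [Finset.inter_eq_right.2 (permFlag_mono σ h), Finset.inter_eq_right.2 (permFlag_mono τ h)]
    simp [card_permFlag]
  · rw [Finset.inter_eq_left.2 (permFlag_mono σ h), Finset.inter_eq_left.2 (permFlag_mono τ h)]
    simp [card_permFlag]

/-- The vertices span the whole space: any `n` of them are linearly independent. -/
lemma ext_inner_vertex {n : ℕ} (hn : 0 < n) {v : Fin (n + 1) → Euc n}
    (hv : IsRegularSimplex v) {x y : Euc n} (h : ∀ i, ⟪x, v i⟫ = ⟪y, v i⟫) : x = y := by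
  have hn' : (0 : ℝ) < n := by exact_mod_cast hn
  have hli : LinearIndependent ℝ fun i : Fin n => v i.castSucc := by
    rw [Fintype.linearIndependent_iff]
    intro c hc
    -- pairing the relation with each vertex shows that all its coefficients agree with the one at
    -- the omitted vertex, which is `0`
    have key : ∀ j : Fin (n + 1), ∑ i : Fin n, c i *
        ((if j = i.castSucc then 1 + 1 / (n : ℝ) else 0) - 1 / n) = 0 := by
      intro j
      have hcj := congrArg (fun z => ⟪z, v j⟫) hc
      simp only [sum_inner, real_inner_smul_left, inner_zero_left] at hcj
      refine Eq.trans ?_ hcj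
      refine Finset.sum_congr rfl fun i _ => ?_
      have := inner_faceSum_vertex hv {i.castSucc} j
      simp only [faceSum, Finset.sum_singleton, Finset.mem_singleton, Finset.card_singleton,
        Nat.cast_one] at this
      rw [this]
    have hl := key (Fin.last n)
    have hne : ∀ i : Fin n, Fin.last n ≠ i.castSucc := fun i => (Fin.castSucc_lt_last i).ne'
    simp only [hne, if_false, ← Finset.sum_mul] at hl
    have hs : ∑ i, c i = 0 := by
      rcases mul_eq_zero.1 hl with h | h
      · exact h
      · have : 1 / (n : ℝ) ≠ 0 := by positivity
        exact absurd (by linarith) this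
    intro i
    have hi := key i.castSucc
    simp only [mul_sub, Finset.sum_sub_distrib, ← Finset.sum_mul, hs, Fin.castSucc_inj, mul_ite,
      mul_zero, Finset.sum_ite_eq, Finset.mem_univ, if_true, zero_mul, sub_zero] at hi
    have : (1 + 1 / (n : ℝ)) ≠ 0 := by positivity
    exact (mul_eq_zero.1 hi).resolve_right this
  have : Nonempty (Fin n) := ⟨⟨0, hn⟩⟩
  let B := basisOfLinearIndependentOfCardEqFinrank hli (by simp)
  have hxy : innerₗ (Euc n) x = innerₗ (Euc n) y := B.ext fun i => by
    simpa [B] using h i.castSucc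
  exact ext_inner_right ℝ fun w => congrArg (fun f => f w) hxy

lemma faceSum_univ {n : ℕ} (hn : 0 < n) {v : Fin (n + 1) → Euc n}
    (hv : IsRegularSimplex v) : faceSum v Finset.univ = 0 := by
  refine ext_inner_vertex hn hv fun i => ?_
  have : (n : ℝ) ≠ 0 := by exact_mod_cast hn.ne'
  rw [inner_faceSum_vertex hv]
  simp
  field_simp
  ring

/-! ### Lower bound: the pieces are almost disjoint -/

/-- A piece with nonnegative weights lies in the cone of its permutation. -/
lemma antitone_of_mem_piece {n : ℕ} {v : Fin (n + 1) → Euc n}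
    (hv : IsRegularSimplex v) (σ : Equiv.Perm (Fin (n + 1))) {r : Fin n → ℝ}
    (hr : ∀ k, 0 ≤ r k) {x : Euc n} (hx : x ∈ piece fun k => r k • faceSum v (permFlag σ k)) :
    Antitone fun i => ⟪x, v (σ i)⟫ := by
  obtain ⟨b, ⟨hb, -⟩, rfl⟩ := hx
  intro i j hij
  simp only [colMap_apply, sum_inner, real_inner_smul_left, inner_faceSum_vertex hv]
  refine Finset.sum_le_sum fun k _ => mul_le_mul_of_nonneg_left
    (mul_le_mul_of_nonneg_left (sub_le_sub_right ?_ _) (hr k)) (hb k)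
  simp only [mem_permFlag, Equiv.symm_apply_apply]
  have : (0 : ℝ) ≤ 1 + 1 / n := by positivity
  split_ifs with h1 h2 <;> first | exact le_rfl | exact this | exact absurd (hij.trans h1) h2

lemma volume_inner_eq {n : ℕ} {v : Fin (n + 1) → Euc n}
    (hv : IsRegularSimplex v) {i j : Fin (n + 1)} (hij : i ≠ j) :
    volume {x : Euc n | ⟪x, v i⟫ = ⟪x, v j⟫} = 0 := by
  have hne : v i - v j ≠ 0 := by
    intro h
    have h1 := hv.2 i j hij
    rw [← sub_eq_zero.1 h, real_inner_self_eq_norm_sq, hv.1] at h1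
    have : (0 : ℝ) ≤ 1 / n := by positivity
    linarith
  have : {x : Euc n | ⟪x, v i⟫ = ⟪x, v j⟫} = ((innerₗ (Euc n) (v i - v j)).ker : Set (Euc n)) := by
    ext x
    simp [real_inner_comm x, sub_eq_zero]
  rw [this]
  refine Measure.addHaar_submodule _ _ fun htop => hne ?_
  have : v i - v j ∈ (innerₗ (Euc n) (v i - v j)).ker := htop ▸ Submodule.mem_top
  exact (inner_self_eq_zero (𝕜 := ℝ)).1 (LinearMap.mem_ker.1 this)

lemma aedisjoint_piece {n : ℕ} {v : Fin (n + 1) → Euc n}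
    (hv : IsRegularSimplex v) {σ τ : Equiv.Perm (Fin (n + 1))} (hστ : σ ≠ τ)
    {r r' : Fin n → ℝ} (hr : ∀ k, 0 ≤ r k) (hr' : ∀ k, 0 ≤ r' k) :
    AEDisjoint volume (piece fun k => r k • faceSum v (permFlag σ k))
      (piece fun k => r' k • faceSum v (permFlag τ k)) := by
  have hnull : volume (⋃ p ∈ {p : Fin (n + 1) × Fin (n + 1) | p.1 ≠ p.2},
      {x : Euc n | ⟪x, v p.1⟫ = ⟪x, v p.2⟫}) = 0 :=
    (measure_biUnion_null_iff (Set.to_countable _)).2 fun p hp => volume_inner_eq hv hp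
  refine measure_mono_null ?_ hnull
  rintro x ⟨hx, hx'⟩
  by_contra hcon
  -- off the hyperplanes the values `⟪x, v i⟫` are distinct, so only one permutation sorts them
  have hinj : Function.Injective fun i => ⟪x, v i⟫ := by
    intro i j hij
    by_contra hne
    exact hcon (Set.mem_biUnion (x := (i, j)) hne hij)
  have h1 := (antitone_of_mem_piece hv σ hr hx).strictAnti_of_injective
    (hinj.comp σ.injective)
  have h2 := (antitone_of_mem_piece hv τ hr' hx').strictAnti_of_injective
    (hinj.comp τ.injective)
  have hm : StrictMono (τ.symm ∘ σ) := by
    intro i j hij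
    have := h1 hij
    rw [← h2.lt_iff_gt]
    simpa using this
  apply hστ
  ext1 i
  have := congrFun (Subsingleton.elim (α := Fin (n + 1) ≃o Fin (n + 1))
    (StrictMono.orderIsoOfSurjective _ hm (τ.symm.surjective.comp σ.surjective))
    (OrderIso.refl _) |> congrArg DFunLike.coe) i
  simpa [Equiv.symm_apply_eq] using this

/-- The flag polytope contains the almost disjoint pieces of all permutations. The second factor on
the left is the volume of the simplex `conv (0, v_{F_0}, …, v_{F_{n-1}})` for the flag of the
identity permutation, hence for every flag. -/
lemma volume_flagPolytope_ge {n : ℕ} {v : Fin (n + 1) → Euc n}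
    (hv : IsRegularSimplex v) {r : Finset (Fin (n + 1)) → ℝ}
    (hr : ∀ s : Finset (Fin (n + 1)), 0 < s.card → s.card ≤ n → 0 ≤ r s) :
    ENNReal.ofReal (∑ σ, ∏ k, r (permFlag σ k)) *
        (ENNReal.ofReal |(colMatrix fun k => faceSum v (permFlag 1 k)).det| * volume (corner n)) ≤
      volume (flagPolytope fun s => r s • faceSum v s) := by
  have hr' : ∀ σ k, 0 ≤ r (permFlag σ k) := fun σ k =>
    hr _ (by simp [card_permFlag]) (by rw [card_permFlag]; exact k.2)
  calc _ = ∑ σ, volume (piece fun k => r (permFlag σ k) • faceSum v (permFlag σ k)) := by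
        rw [ENNReal.ofReal_sum_of_nonneg fun σ _ => Finset.prod_nonneg fun k _ => hr' σ k,
          Finset.sum_mul]
        refine Finset.sum_congr rfl fun σ _ => ?_
        rw [volume_piece, det_colMatrix_smul, abs_mul,
          abs_of_nonneg (Finset.prod_nonneg fun k _ => hr' σ k), abs_det_permFlag hv σ 1,
          ENNReal.ofReal_mul (Finset.prod_nonneg fun k _ => hr' σ k), mul_assoc]
    _ = volume (⋃ σ, piece fun k => r (permFlag σ k) • faceSum v (permFlag σ k)) := by
        rw [measure_iUnion₀ (fun σ τ h => aedisjoint_piece hv h (hr' σ) (hr' τ))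
          fun σ => nullMeasurableSet_piece _, tsum_fintype]
    _ ≤ _ := by
        refine measure_mono (Set.iUnion_subset fun σ => ?_)
        exact (piece_subset _).trans (Set.subset_biUnion_of_mem
          (u := fun g : Fin n → Finset (Fin (n + 1)) =>
            convexHull ℝ (insert 0 (Set.range fun k => r (g k) • faceSum v (g k))))
          (show permFlag σ ∈ {g | IsFlag g} from isFlag_permFlag σ))

/-! ### Upper bound: the pieces cover the simplex and its polar -/

lemma sum_mul_sub_succ (A : ℕ → ℝ) (n : ℕ) :
    ∑ k ∈ Finset.range n, ((k : ℝ) + 1) * (A k - A (k + 1)) =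
      ∑ k ∈ Finset.range (n + 1), A k - (n + 1) * A n := by
  induction n with
  | zero => simp
  | succ n ih =>
    rw [Finset.sum_range_succ, ih, Finset.sum_range_succ _ (n + 1)]
    push_cast
    ring

lemma sum_ite_sub_succ (A : ℕ → ℝ) (n j : ℕ) (hj : j ≤ n) :
    ∑ k ∈ Finset.range n, (if j ≤ k then A k - A (k + 1) else 0) = A j - A n := by
  induction n, hj using Nat.le_induction with
  | base =>
    rw [sub_self]
    exact Finset.sum_eq_zero fun k hk => if_neg (by simpa using hk)
  | succ n hn ih =>
    rw [Finset.sum_range_succ, ih, if_pos hn]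
    ring

/-- Abel summation: sorting the values `a i = ⟪x, v i⟫` decreasingly writes `x` as a nonnegative
combination of the vectors `v_{F_k}` of a flag. Both weighted sums of the coefficients telescope to
an extreme value of `a`, because `∑ i, a i = 0`. -/
lemma exists_sorted {n : ℕ} (hn : 0 < n) {v : Fin (n + 1) → Euc n}
    (hv : IsRegularSimplex v) (x : Euc n) :
    ∃ (σ : Equiv.Perm (Fin (n + 1))) (β : Fin n → ℝ), (∀ k, 0 ≤ β k) ∧
      x = ∑ k, β k • faceSum v (permFlag σ k) ∧
      ∑ k : Fin n, ((k : ℝ) + 1) * β k = -(n * ⟪x, v (σ (Fin.last n))⟫) ∧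
      ∑ k : Fin n, ((n : ℝ) - k) * β k = n * ⟪x, v (σ 0)⟫ := by
  have hn' : (0 : ℝ) < n := by exact_mod_cast hn
  obtain ⟨σ, hσ⟩ : ∃ σ : Equiv.Perm (Fin (n + 1)), Antitone fun i => ⟪x, v (σ i)⟫ :=
    ⟨_, fun i j h => neg_le_neg_iff.1 (Tuple.monotone_sort (fun i => -⟪x, v i⟫) h)⟩
  let A : ℕ → ℝ := fun k => if h : k < n + 1 then ⟪x, v (σ ⟨k, h⟩)⟫ else 0
  have hA : ∀ i : Fin (n + 1), ⟪x, v (σ i)⟫ = A i := fun i => by simp only [A, dif_pos i.2]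
  have hsum : ∑ k ∈ Finset.range (n + 1), A k = 0 := by
    rw [Finset.sum_range, ← Finset.sum_congr rfl fun i _ => hA i,
      Equiv.sum_comp σ fun i => ⟪x, v i⟫, ← inner_sum]
    have := faceSum_univ hn hv
    rw [faceSum] at this
    rw [this, inner_zero_right]
  have habel := sum_mul_sub_succ A n
  rw [hsum, zero_sub, Finset.sum_range] at habel
  have htel : ∑ k : Fin n, (A k - A (k + 1)) = A 0 - A n := by
    rw [Fin.sum_univ_eq_sum_range fun k => A k - A (k + 1), Finset.sum_range_sub']
  have hS : ∑ k : Fin n, ((k : ℝ) + 1) * (n / (n + 1) * (A k - A (k + 1))) = -(n * A n) := by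
    calc _ = n / (n + 1) * ∑ k : Fin n, ((k : ℝ) + 1) * (A k - A (k + 1)) := by
          rw [Finset.mul_sum]
          exact Finset.sum_congr rfl fun k _ => by ring
      _ = _ := by
          rw [habel]
          field_simp
  refine ⟨σ, fun k => n / (n + 1) * (A k - A (k + 1)), fun k => ?_, ?_, ?_, ?_⟩
  · have h1 := hσ (Fin.castSucc_lt_succ (i := k)).le
    simp only [hA, Fin.val_succ, Fin.val_castSucc] at h1
    exact mul_nonneg (by positivity) (sub_nonneg.2 h1)
  · refine ext_inner_vertex hn hv fun i => ?_
    obtain ⟨j, rfl⟩ := σ.surjective i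
    simp only [sum_inner, real_inner_smul_left, inner_faceSum_vertex hv, mem_permFlag,
      card_permFlag, Equiv.symm_apply_apply, hA]
    have hj := sum_ite_sub_succ A n j (Nat.lt_succ_iff.1 j.2)
    rw [Finset.sum_range] at hj
    calc A j = (A j - A n) - 1 / n * -(n * A n) := by
          field_simp
          ring
      _ = _ := by
          rw [← hj, ← hS, Finset.mul_sum, ← Finset.sum_sub_distrib]
          refine Finset.sum_congr rfl fun k _ => ?_
          simp only [Fin.le_def, Fin.val_castSucc]
          split_ifs <;> push_cast <;> field_simp <;> ring
  · rw [hS, hA, Fin.val_last]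
  · calc _ = (n + 1) * (n / (n + 1) * ∑ k : Fin n, (A k - A (k + 1))) -
          ∑ k : Fin n, ((k : ℝ) + 1) * (n / (n + 1) * (A k - A (k + 1))) := by
          rw [Finset.mul_sum, Finset.mul_sum, ← Finset.sum_sub_distrib]
          exact Finset.sum_congr rfl fun k _ => by ring
      _ = _ := by
          rw [hS, htel, hA, Fin.val_zero]
          field_simp
          ring

/-- If every point of `K` is, along some flag, a combination of the vectors `ρ k • v_{F_k}` with
nonnegative coefficients of total mass at most `1`, then the pieces with weights `ρ` cover `K`. They
all have the same volume, and there are `(n + 1)!` of them. -/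
lemma volume_le_of_cover {n : ℕ} {v : Fin (n + 1) → Euc n}
    (hv : IsRegularSimplex v) {ρ : Fin n → ℝ} (hρ : ∀ k, 0 < ρ k) {K : Set (Euc n)}
    (hK : ∀ x ∈ K, ∃ (σ : Equiv.Perm (Fin (n + 1))) (β : Fin n → ℝ), (∀ k, 0 ≤ β k) ∧
      x = ∑ k, β k • faceSum v (permFlag σ k) ∧ ∑ k, (ρ k)⁻¹ * β k ≤ 1) :
    volume K ≤ ENNReal.ofReal (((n + 1).factorial : ℝ) * ∏ k, ρ k) *
      (ENNReal.ofReal |(colMatrix fun k => faceSum v (permFlag 1 k)).det| * volume (corner n)) := by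
  calc volume K ≤ volume (⋃ σ, piece fun k => ρ k • faceSum v (permFlag σ k)) := by
        refine measure_mono fun x hx => ?_
        obtain ⟨σ, β, hβ, rfl, h1⟩ := hK x hx
        refine Set.mem_iUnion.2 ⟨σ, WithLp.toLp 2 fun k => (ρ k)⁻¹ * β k,
          ⟨fun k => mul_nonneg (inv_nonneg.2 (hρ k).le) (hβ k), h1⟩, ?_⟩
        rw [colMap_apply]
        refine Finset.sum_congr rfl fun k _ => ?_
        rw [smul_smul]
        congr 1
        have := (hρ k).ne'
        simp only
        field_simp
    _ ≤ ∑ σ, volume (piece fun k => ρ k • faceSum v (permFlag σ k)) := by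
        simpa using measure_iUnion_le (μ := volume)
          fun σ => piece fun k => ρ k • faceSum v (permFlag σ k)
    _ = _ := by
        have hp : 0 ≤ ∏ k, ρ k := Finset.prod_nonneg fun k _ => (hρ k).le
        have : ∀ σ, volume (piece fun k => ρ k • faceSum v (permFlag σ k)) =
            ENNReal.ofReal (∏ k, ρ k) * (ENNReal.ofReal
              |(colMatrix fun k => faceSum v (permFlag 1 k)).det| * volume (corner n)) := by
          intro σ
          rw [volume_piece, det_colMatrix_smul, abs_mul, abs_of_nonneg hp,
            abs_det_permFlag hv σ 1, ENNReal.ofReal_mul hp, mul_assoc]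
        rw [Finset.sum_congr rfl fun σ _ => this σ, Finset.sum_const, Finset.card_univ,
          Fintype.card_perm, Fintype.card_fin, nsmul_eq_mul, ENNReal.ofReal_mul (by positivity),
          ENNReal.ofReal_natCast, mul_assoc]

/-- The facet opposite to `v i` lies on the hyperplane `⟪x, v i⟫ = -1 / n`. -/
lemma inner_ge_of_mem_simplexHull {n : ℕ} {v : Fin (n + 1) → Euc n}
    (hv : IsRegularSimplex v) {x : Euc n} (hx : x ∈ simplexHull v) (i : Fin (n + 1)) :
    -(1 / (n : ℝ)) ≤ ⟪x, v i⟫ := by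
  have hc : Convex ℝ {x : Euc n | -(1 / (n : ℝ)) ≤ ⟪x, v i⟫} := by
    have := convex_halfSpace_ge (𝕜 := ℝ) (f := fun x : Euc n => ⟪x, v i⟫)
      ⟨fun x y => inner_add_left _ _ _, fun c x => real_inner_smul_left _ _ _⟩ (-(1 / (n : ℝ)))
    exact this
  refine convexHull_min ?_ hc hx
  rintro _ ⟨j, rfl⟩
  by_cases hji : j = i
  · subst hji
    have : (0 : ℝ) ≤ 1 / n := by positivity
    simp only [Set.mem_ofPred_eq, real_inner_self_eq_norm_sq, hv.1]
    linarith
  · exact (hv.2 j i hji).ge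

lemma volume_simplexHull_le {n : ℕ} (hn : 0 < n) {v : Fin (n + 1) → Euc n}
    (hv : IsRegularSimplex v) :
    volume (simplexHull v) ≤
      ENNReal.ofReal (((n + 1).factorial : ℝ) * ∏ k : Fin n, ((k : ℝ) + 1)⁻¹) *
      (ENNReal.ofReal |(colMatrix fun k => faceSum v (permFlag 1 k)).det| * volume (corner n)) := by
  refine volume_le_of_cover hv (fun k => by positivity) fun x hx => ?_
  obtain ⟨σ, β, hβ, hxβ, h1, -⟩ := exists_sorted hn hv x
  refine ⟨σ, β, hβ, hxβ, ?_⟩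
  simp only [inv_inv]
  rw [h1]
  have hn' : (0 : ℝ) < n := by exact_mod_cast hn
  have := mul_le_mul_of_nonneg_left
    (inner_ge_of_mem_simplexHull hv hx (σ (Fin.last n))) hn'.le
  have h2 : (n : ℝ) * -(1 / n) = -1 := by field_simp
  linarith

lemma volume_polar_le {n : ℕ} (hn : 0 < n) {v : Fin (n + 1) → Euc n}
    (hv : IsRegularSimplex v) :
    volume (polarAt (simplexHull v) 0) ≤
      ENNReal.ofReal (((n + 1).factorial : ℝ) * ∏ k : Fin n, ((n : ℝ) / (n - k))) *
      (ENNReal.ofReal |(colMatrix fun k => faceSum v (permFlag 1 k)).det| * volume (corner n)) := by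
  have hn' : (0 : ℝ) < n := by exact_mod_cast hn
  refine volume_le_of_cover hv (fun k => ?_) fun x hx => ?_
  · have : (k : ℝ) < n := by exact_mod_cast k.2
    exact div_pos hn' (by linarith)
  obtain ⟨σ, β, hβ, hxβ, -, h1⟩ := exists_sorted hn hv x
  refine ⟨σ, β, hβ, hxβ, ?_⟩
  have hle : ⟪x, v (σ 0)⟫ ≤ 1 := by
    have := hx (v (σ 0)) (subset_convexHull ℝ _ ⟨_, rfl⟩)
    rwa [sub_zero] at this
  calc _ = (∑ k : Fin n, ((n : ℝ) - k) * β k) / n := by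
        rw [Finset.sum_div]
        refine Finset.sum_congr rfl fun k _ => ?_
        rw [inv_div]
        ring
    _ = ⟪x, v (σ 0)⟫ := by
        rw [h1]
        field_simp
    _ ≤ 1 := hle

/-! ### The volume product -/

lemma dualCentroid_eq {n : ℕ} (hn : 0 < n) {v : Fin (n + 1) → Euc n}
    (hv : IsRegularSimplex v) (s : Finset (Fin (n + 1))) (h0 : 0 < s.card) (h1 : s.card ≤ n) :
    dualCentroid v s = ((n : ℝ) / (n + 1 - s.card)) • faceSum v s := by
  have hn' : (0 : ℝ) < n := by exact_mod_cast hn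
  have h0' : (0 : ℝ) < s.card := by exact_mod_cast h0
  have h1' : (s.card : ℝ) ≤ n := by exact_mod_cast h1
  have h2 : (0 : ℝ) < n + 1 - s.card := by linarith
  have hc : centroidOf v s = (s.card : ℝ)⁻¹ • faceSum v s := rfl
  have hnorm : ‖centroidOf v s‖ ^ 2 = (n + 1 - s.card) / (n * s.card) := by
    rw [hc, ← real_inner_self_eq_norm_sq, real_inner_smul_left, real_inner_smul_right,
      inner_faceSum hv, Finset.inter_self]
    field_simp
  rw [dualCentroid, hnorm, hc, smul_smul]
  congr 1
  field_simp

lemma sum_mul_sum_inv_ge {ι : Type*} [Fintype ι] (a : ι → ℝ) (ha : ∀ i, 0 < a i) :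
    (Fintype.card ι : ℝ) ^ 2 ≤ (∑ i, a i) * ∑ i, (a i)⁻¹ := by
  have := Finset.sum_sq_le_sum_mul_sum_of_sq_le_mul Finset.univ (r := fun _ => (1 : ℝ)) (f := a)
    (g := fun i => (a i)⁻¹) (fun i _ => (ha i).le) (fun i _ => (inv_pos.2 (ha i)).le)
    (fun i _ => by simp [(ha i).ne'])
  simpa using this

lemma flagPolytope_congr {n : ℕ} {w w' : Finset (Fin (n + 1)) → Euc n}
    (h : ∀ s, 0 < s.card → s.card ≤ n → w s = w' s) : flagPolytope w = flagPolytope w' := by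
  refine Set.iUnion₂_congr fun g hg => ?_
  have : (fun k => w (g k)) = fun k => w' (g k) :=
    funext fun k => h _ (by rw [hg.1]; omega) (by rw [hg.1]; exact k.2)
  rw [this]

/-- Lemma on the auxiliary polytopes `Q`, `Q'`: for any choice of parameters
`t_F ∈ [1−δ, 1]`, the polytopes `Q = ⋃_flags conv(0, t_F·c_F, …)` and
`Q' = ⋃_flags conv(0, (1/t_F)·c_{F^*}, …)` satisfy
`vol(Q)·vol(Q') ≥ vol(Δₙ)·vol(Δₙ°)`. -/
theorem volume_product_flag_polytopes (n : ℕ) (hn : 0 < n)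
    (v : Fin (n + 1) → Euc n) (hv : IsRegularSimplex v)
    (δ : ℝ) (hδ : 0 < δ) (hδ1 : δ < 1)
    (t : Finset (Fin (n + 1)) → ℝ)
    (ht : ∀ s : Finset (Fin (n + 1)), 0 < s.card → s.card ≤ n →
      t s ∈ Set.Icc (1 - δ) 1) :
    volume (flagPolytope (fun s => t s • centroidOf v s)) *
      volume (flagPolytope (fun s => (t s)⁻¹ • dualCentroid v s)) ≥
    volume (simplexHull v) * volume (polarAt (simplexHull v) 0) := by
  have hn' : (0 : ℝ) < n := by exact_mod_cast hn
  have htpos : ∀ s : Finset (Fin (n + 1)), 0 < s.card → s.card ≤ n → 0 < t s := fun s h0 h1 => by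
    have := (ht s h0 h1).1
    linarith
  have hcard : ∀ (σ : Equiv.Perm (Fin (n + 1))) k, 0 < t (permFlag σ k) := fun σ k =>
    htpos _ (by simp [card_permFlag]) (by rw [card_permFlag]; exact k.2)
  set κ := ENNReal.ofReal |(colMatrix fun k => faceSum v (permFlag 1 k)).det| * volume (corner n)
  set P : ℝ := ∏ k : Fin n, ((k : ℝ) + 1)⁻¹
  set P' : ℝ := ∏ k : Fin n, ((n : ℝ) / (n - k))
  have hP0 : 0 ≤ P := Finset.prod_nonneg fun k _ => by positivity
  have hP0' : 0 ≤ P' := Finset.prod_nonneg fun k _ => by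
    have : (k : ℝ) < n := by exact_mod_cast k.2
    exact div_nonneg hn'.le (by linarith)
  set A : Equiv.Perm (Fin (n + 1)) → ℝ := fun σ => ∏ k, t (permFlag σ k)
  have hApos : ∀ σ, 0 < A σ := fun σ => Finset.prod_pos fun k _ => hcard σ k
  have hQ : ENNReal.ofReal ((∑ σ, A σ) * P) * κ ≤
      volume (flagPolytope fun s => t s • centroidOf v s) := by
    have h := volume_flagPolytope_ge hv (r := fun s => t s * (s.card : ℝ)⁻¹)
      fun s h0 h1 => mul_nonneg (htpos s h0 h1).le (by positivity)
    simp only [card_permFlag, Finset.prod_mul_distrib, ← Finset.sum_mul, Nat.cast_add,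
      Nat.cast_one, mul_smul] at h
    exact h
  have hQ' : ENNReal.ofReal ((∑ σ, (A σ)⁻¹) * P') * κ ≤
      volume (flagPolytope fun s => (t s)⁻¹ • dualCentroid v s) := by
    have h := volume_flagPolytope_ge hv
      (r := fun s => (t s)⁻¹ * ((n : ℝ) / (n + 1 - s.card)))
      fun s h0 h1 => mul_nonneg (inv_nonneg.2 (htpos s h0 h1).le) (by
        have : (s.card : ℝ) ≤ n := by exact_mod_cast h1
        exact div_nonneg hn'.le (by linarith))
    rw [flagPolytope_congr (w' := fun s => (t s)⁻¹ • dualCentroid v s) fun s h0 h1 => by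
      rw [dualCentroid_eq hn hv s h0 h1, mul_smul]] at h
    simp only [card_permFlag, Finset.prod_mul_distrib, ← Finset.sum_mul, Nat.cast_add,
      Nat.cast_one, add_sub_add_right_eq_sub, Finset.prod_inv_distrib] at h
    exact h
  have hCS := sum_mul_sum_inv_ge A hApos
  rw [Fintype.card_perm, Fintype.card_fin] at hCS
  calc volume (simplexHull v) * volume (polarAt (simplexHull v) 0)
      ≤ (ENNReal.ofReal ((n + 1).factorial * P) * κ) *
          (ENNReal.ofReal ((n + 1).factorial * P') * κ) :=
        mul_le_mul' (volume_simplexHull_le hn hv) (volume_polar_le hn hv)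
    _ = ENNReal.ofReal (((n + 1).factorial : ℝ) ^ 2 * (P * P')) * (κ * κ) := by
        rw [mul_mul_mul_comm, ← ENNReal.ofReal_mul (by positivity)]
        congr 2
        ring
    _ ≤ ENNReal.ofReal (((∑ σ, A σ) * ∑ σ, (A σ)⁻¹) * (P * P')) * (κ * κ) := by
        gcongr
    _ = (ENNReal.ofReal ((∑ σ, A σ) * P) * κ) * (ENNReal.ofReal ((∑ σ, (A σ)⁻¹) * P') * κ) := by
        rw [mul_mul_mul_comm (ENNReal.ofReal ((∑ σ, A σ) * P)), ← ENNReal.ofReal_mul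
          (mul_nonneg (Finset.sum_nonneg fun σ _ => (hApos σ).le) hP0)]
        congr 2
        ring
    _ ≤ _ := mul_le_mul' hQ hQ'
end
end
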